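/- Let k₀ denote the field k with the abelian Poisson algebra structure (zero multiplication, zero bracket). Then PH²(k₀, k₀) is in bijection with {(a,b) ∈ k² : ab = 0}, via the map sending (a,b) to the class of the Poisson algebra k²_{a,b} with basis {e₁, e₂}, multiplication e₁⋆e₁ = a e₂, and bracket [e₁,e₂] = b e₂ (all other products and brackets of basis vectors zero). In particular, up to isomorphism of Poisson algebras there exist exactly three 2-dimensional metabelian Poisson algebras over k: k²_{(0,0)}, k²_{(1,0)} and k²_{(0,1)}. -/

import Mathlib

/-!
Fix a plane `E` with a basis `e₁, e₂` such that `k e₂` contains all products and brackets and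
`e₂ e₂ = 0`. Write `e₁ e₁ = a e₂`, `e₁ e₂ = l e₂`, `e₂ e₁ = r e₂`, `[e₁, e₂] = b e₂`.
Associativity on `(e₁, e₁, e₂)` and `(e₂, e₁, e₁)` gives `l² = r² = 0`, so `l = r = 0`, and the
Leibniz law for `[e₁ e₁, e₁]` then gives `ab = 0`. So `E` is `k²_{a,b}` in this basis
(`exists_model_params`).

For an extension of `k₀` by `k₀`, take `e₂` the image of `1` and `e₁` any lift of `1`; this shows
that every extension is equivalent to some `k²_{a,b}` (`exists_modelRel`). An equivalence
`k²_{a,b} → k²_{a',b'}` fixes `e₂` and sends `e₁` to `e₁ + c e₂`, which changes neither `e₁ e₁` nor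
`[e₁, e₂]`, so `(a,b) = (a',b')` (`params_eq_of_extRel`). Since equivalence of extensions is an
equivalence relation, this proves the bijection.

For a non-abelian metabelian plane with abelian ideal `I`, take `e₂ ≠ 0` a product or bracket in
`I` and `e₁ ∉ I`. Rescaling `e₂` or `e₁` reduces a nonzero `a` or `b` to `1`. The three remaining
models are distinguished by the vanishing of the multiplication and of the bracket.
-/


universe u

section Defs

variable (k : Type u) [Field k]

/-- A map in two variables is `k`-bilinear. -/
def IsBilin {A B C : Type u} [AddCommGroup A] [Module k A] [AddCommGroup B] [Module k B]
    [AddCommGroup C] [Module k C] (f : A → B → C) : Prop :=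
  (∀ a a' b, f (a + a') b = f a b + f a' b) ∧
  (∀ (c : k) (a b), f (c • a) b = c • f a b) ∧
  (∀ a b b', f a (b + b') = f a b + f a b') ∧
  (∀ (c : k) (a b), f a (c • b) = c • f a b)

/-- `(A, mul, br)` is a (not necessarily commutative or unital) Poisson algebra over `k`:
`mul` is a bilinear associative multiplication, `br` is a Lie bracket and the
Leibniz law `[ab, c] = [a,c]b + a[b,c]` holds. -/
structure IsPoisson {A : Type u} [AddCommGroup A] [Module k A]
    (mul br : A → A → A) : Prop where
  mul_bilin : IsBilin k mul
  br_bilin : IsBilin k br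
  mul_assoc : ∀ a b c, mul (mul a b) c = mul a (mul b c)
  br_alt : ∀ a, br a a = 0
  jacobi : ∀ a b c, br (br a b) c + br (br b c) a + br (br c a) b = 0
  leibniz : ∀ a b c, br (mul a b) c = mul (br a c) b + mul a (br b c)

variable (P V : Type u) [AddCommGroup P] [Module k P] [AddCommGroup V] [Module k V]

/-- A pre-crossed datum `Ω(P,V) = (⇀, ◁, ϑ, ·_V, ▷, f, [-,-]_V)` of a Poisson algebra `P`
by a vector space `V`:  seven bilinear maps.  Here `hl = ⇀`, `hr = ◁`, `theta = ϑ`,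
`mulV = ·_V`, `lact = ▷`, `cf = f` and `brV = [-,-]_V`. -/
structure PreCrossedDatum where
  hl : P → V → V
  hr : V → P → V
  theta : P → P → V
  mulV : V → V → V
  lact : P → V → V
  cf : P → P → V
  brV : V → V → V
  hl_bilin : IsBilin k hl
  hr_bilin : IsBilin k hr
  theta_bilin : IsBilin k theta
  mulV_bilin : IsBilin k mulV
  lact_bilin : IsBilin k lact
  cf_bilin : IsBilin k cf
  brV_bilin : IsBilin k brV

variable {k P V}

/-- The multiplication `(p,x) ⋆ (q,y) = (pq, ϑ(p,q) + p⇀y + x◁q + x·y)` of `P ♯ V`. -/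
def sharpMul (mulP : P → P → P) (Om : PreCrossedDatum k P V) :
    P × V → P × V → P × V :=
  fun a b => (mulP a.1 b.1,
    Om.theta a.1 b.1 + Om.hl a.1 b.2 + Om.hr a.2 b.1 + Om.mulV a.2 b.2)

/-- The bracket `{(p,x), (q,y)} = ([p,q], f(p,q) + p▷y − q▷x + [x,y]_V)` of `P ♯ V`. -/
def sharpBr (brP : P → P → P) (Om : PreCrossedDatum k P V) :
    P × V → P × V → P × V :=
  fun a b => (brP a.1 b.1,
    Om.cf a.1 b.1 + Om.lact a.1 b.2 - Om.lact b.1 a.2 + Om.brV a.2 b.2)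

/-- A pre-crossed datum is a crossed system when `P ♯ V` is a Poisson algebra. -/
def IsCrossedSystem (mulP brP : P → P → P) (Om : PreCrossedDatum k P V) : Prop :=
  IsPoisson k (sharpMul mulP Om) (sharpBr brP Om)

end Defs

section Ext

/-- An extension `0 → V → E → P → 0` of the Poisson algebra `(P, mulP, brP)` by the Poisson
algebra `(V, mulV, brV)`. -/
structure PoissonExt (k P V : Type u) [Field k] [AddCommGroup P] [Module k P]
    [AddCommGroup V] [Module k V]
    (mulP brP : P → P → P) (mulV brV : V → V → V) : Type (u + 1) where
  carrier : Type u
  [addE : AddCommGroup carrier]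
  [modE : Module k carrier]
  mulE : carrier → carrier → carrier
  brE : carrier → carrier → carrier
  poisson : IsPoisson k mulE brE
  incl : V →ₗ[k] carrier
  proj : carrier →ₗ[k] P
  incl_mul : ∀ x y, incl (mulV x y) = mulE (incl x) (incl y)
  incl_br : ∀ x y, incl (brV x y) = brE (incl x) (incl y)
  proj_mul : ∀ a b, proj (mulE a b) = mulP (proj a) (proj b)
  proj_br : ∀ a b, proj (brE a b) = brP (proj a) (proj b)
  incl_inj : Function.Injective incl
  proj_surj : Function.Surjective proj
  exact : ∀ e, proj e = 0 ↔ e ∈ Set.range incl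

variable {k P V : Type u} [Field k] [AddCommGroup P] [Module k P]
  [AddCommGroup V] [Module k V] {mulP brP : P → P → P} {mulV brV : V → V → V}

/-- Equivalence of extensions: an isomorphism of Poisson algebras stabilizing `V`
and co-stabilizing `P`. -/
def ExtRel (e₁ e₂ : PoissonExt k P V mulP brP mulV brV) : Prop :=
  letI := e₁.addE; letI := e₁.modE; letI := e₂.addE; letI := e₂.modE
  ∃ φ : e₁.carrier ≃ₗ[k] e₂.carrier,
    (∀ a b, φ (e₁.mulE a b) = e₂.mulE (φ a) (φ b)) ∧
    (∀ a b, φ (e₁.brE a b) = e₂.brE (φ a) (φ b)) ∧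
    (∀ v, φ (e₁.incl v) = e₂.incl v) ∧
    (∀ a, e₂.proj (φ a) = e₁.proj a)

end Ext

section Iso

variable (k : Type u) [Field k]

/-- Isomorphism of Poisson algebras `(A, mulA, brA) ≅ (B, mulB, brB)`. -/
def PoissonIso {A B : Type u} [AddCommGroup A] [Module k A] [AddCommGroup B] [Module k B]
    (mulA brA : A → A → A) (mulB brB : B → B → B) : Prop :=
  ∃ φ : A ≃ₗ[k] B,
    (∀ x y, φ (mulA x y) = mulB (φ x) (φ y)) ∧
    (∀ x y, φ (brA x y) = brB (φ x) (φ y))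

/-- A Poisson algebra is metabelian if it is an extension of an abelian Poisson algebra by
an abelian Poisson algebra: there is a subspace `I`, abelian as a Poisson subalgebra,
containing all products and brackets (so that the quotient is abelian as well). -/
def IsMetabelian {E : Type u} [AddCommGroup E] [Module k E] (mulE brE : E → E → E) : Prop :=
  ∃ I : Submodule k E,
    (∀ x y, mulE x y ∈ I ∧ brE x y ∈ I) ∧
    (∀ x ∈ I, ∀ y ∈ I, mulE x y = 0 ∧ brE x y = 0)

end Iso

section Statement

variable (k : Type u) [Field k]

/-- The multiplication of `k²_{a,b}`: `e₁ ⋆ e₁ = a e₂` (all other products zero), on the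
vector space `k × k` with `e₁ = (1,0)`, `e₂ = (0,1)`. -/
def mulAB (a : k) : k × k → k × k → k × k :=
  fun u v => (0, a * (u.1 * v.1))

/-- The bracket of `k²_{a,b}`: `[e₁, e₂] = b e₂` (alternating, all other brackets zero). -/
def brAB (b : k) : k × k → k × k → k × k :=
  fun u v => (0, b * (u.1 * v.2 - v.1 * u.2))

variable {k}

/-- If the line spanned by `e₂ = φ (0, 1)` contains all products and brackets and `e₂ e₂ = 0`, then
`φ` is an isomorphism from some `k²_{a,b}` with `ab = 0`. -/
lemma exists_model_params {E : Type u} [AddCommGroup E] [Module k E] {mulE brE : E → E → E}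
    (hP : IsPoisson k mulE brE) (φ : (k × k) ≃ₗ[k] E)
    (hmul : ∀ x y, ∃ c : k, mulE x y = φ (0, c))
    (hbr : ∀ x y, ∃ c : k, brE x y = φ (0, c))
    (h22 : mulE (φ (0, 1)) (φ (0, 1)) = 0) :
    ∃ a b : k, a * b = 0 ∧ (∀ u v, φ (mulAB k a u v) = mulE (φ u) (φ v)) ∧
      (∀ u v, φ (brAB k b u v) = brE (φ u) (φ v)) := by
  obtain ⟨a, ha⟩ := hmul (φ (1, 0)) (φ (1, 0))
  obtain ⟨l, hl⟩ := hmul (φ (1, 0)) (φ (0, 1))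
  obtain ⟨r, hr⟩ := hmul (φ (0, 1)) (φ (1, 0))
  obtain ⟨b, hb⟩ := hbr (φ (1, 0)) (φ (0, 1))
  obtain ⟨m1, m2, m3, m4⟩ := hP.mul_bilin
  obtain ⟨b1, b2, b3, b4⟩ := hP.br_bilin
  have e2 : ∀ c : k, φ (0, c) = c • φ (0, 1) := fun c => by simp [← map_smul]
  have dec : ∀ u : k × k, φ u = u.1 • φ (1, 0) + u.2 • φ (0, 1) := fun u => by
    rw [← map_smul, ← map_smul, ← map_add]; simp
  have ne2 : φ (0, 1) ≠ 0 := by simp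
  rw [e2 a] at ha
  rw [e2 l] at hl
  rw [e2 r] at hr
  rw [e2 b] at hb
  have hanti : brE (φ (0, 1)) (φ (1, 0)) = -(b • φ (0, 1)) := by
    have h := hP.br_alt (φ (1, 0) + φ (0, 1))
    rw [b1, b3, b3, hP.br_alt, hP.br_alt, hb] at h
    rw [eq_neg_iff_add_eq_zero, ← h]; abel
  have hl0 : l = 0 := by
    have h := hP.mul_assoc (φ (1, 0)) (φ (1, 0)) (φ (0, 1))
    rw [ha, hl, m2, m4, h22, hl, smul_zero, smul_smul] at h
    simpa [ne2] using h.symm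
  have hr0 : r = 0 := by
    have h := hP.mul_assoc (φ (0, 1)) (φ (1, 0)) (φ (1, 0))
    rw [ha, hr, m2, m4, h22, hr, smul_zero, smul_smul] at h
    simpa [ne2] using h
  subst hl0 hr0
  have hz : mulE 0 (φ (1, 0)) = 0 ∧ mulE (φ (1, 0)) 0 = 0 :=
    ⟨by simpa using m2 0 0 (φ (1, 0)), by simpa using m4 0 (φ (1, 0)) 0⟩
  have hab : a * b = 0 := by
    have h := hP.leibniz (φ (1, 0)) (φ (1, 0)) (φ (1, 0))
    rw [hP.br_alt, hz.1, hz.2, ha, b2, hanti] at h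
    simpa [ne2] using h
  refine ⟨a, b, hab, fun u v => ?_, fun u v => ?_⟩
  · rw [dec u, dec v]
    simp only [m1, m2, m3, m4, ha, hl, hr, h22, mulAB]
    rw [e2 (a * _)]
    module
  · rw [dec u, dec v]
    simp only [b1, b2, b3, b4, hP.br_alt, hb, hanti, brAB]
    rw [e2 (b * _)]
    module

lemma isPoisson_model {a b : k} (hab : a * b = 0) : IsPoisson k (mulAB k a) (brAB k b) where
  mul_bilin := by
    refine ⟨?_, ?_, ?_, ?_⟩ <;> intros <;> ext <;> simp [mulAB] <;> ring
  br_bilin := by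
    refine ⟨?_, ?_, ?_, ?_⟩ <;> intros <;> ext <;> simp [brAB] <;> ring
  mul_assoc := by intros; simp [mulAB]
  br_alt := by intro x; simp [brAB]
  jacobi := by intros; ext <;> simp [brAB]; ring
  leibniz := by
    intro x y z
    ext <;> simp [mulAB, brAB]
    rcases mul_eq_zero.mp hab with h | h <;> simp [h]

lemma isMetabelian_model (a b : k) : IsMetabelian k (mulAB k a) (brAB k b) := by
  refine ⟨LinearMap.ker (LinearMap.fst k k k), fun x y => ?_, fun x hx y hy => ?_⟩
  · simp [mulAB, brAB]
  · simp only [LinearMap.mem_ker, LinearMap.fst_apply] at hx hy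
    simp [mulAB, brAB, hx, hy]

variable (k) in
/-- Extensions of `k₀` by `k₀`. -/
abbrev AbExt : Type (u + 1) :=
  PoissonExt k k k (fun _ _ => 0) (fun _ _ => 0) (fun _ _ => 0) (fun _ _ => 0)

/-- `k²_{a,b}` as an extension of `k₀` by `k₀`, with kernel `k e₂`. -/
def modelExt (ab : {ab : k × k // ab.1 * ab.2 = 0}) : AbExt k where
  carrier := k × k
  mulE := mulAB k ab.1.1
  brE := brAB k ab.1.2
  poisson := isPoisson_model ab.2
  incl := LinearMap.inr k k k
  proj := LinearMap.fst k k k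
  incl_mul := by intros; simp [mulAB]
  incl_br := by intros; simp [brAB]
  proj_mul := by intros; simp [mulAB]
  proj_br := by intros; simp [brAB]
  incl_inj := LinearMap.inr_injective
  proj_surj := LinearMap.fst_surjective
  exact := by
    rintro ⟨x, y⟩
    simp [eq_comm]

lemma extRel_equivalence : Equivalence (fun e₁ e₂ : AbExt k => ExtRel e₁ e₂) where
  refl e := by
    let := e.addE; let := e.modE
    exact ⟨LinearEquiv.refl k _, by simp, by simp, by simp, by simp⟩
  symm {e₁ e₂} := by
    let := e₁.addE; let := e₁.modE; let := e₂.addE; let := e₂.modE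
    rintro ⟨φ, h1, h2, h3, h4⟩
    refine ⟨φ.symm, fun a b => ?_, fun a b => ?_, fun v => ?_, fun a => ?_⟩
    · rw [LinearEquiv.symm_apply_eq, h1]; simp
    · rw [LinearEquiv.symm_apply_eq, h2]; simp
    · rw [LinearEquiv.symm_apply_eq, h3]
    · rw [← h4]; simp
  trans {e₁ e₂ e₃} := by
    let := e₁.addE; let := e₁.modE; let := e₂.addE; let := e₂.modE
    let := e₃.addE; let := e₃.modE
    rintro ⟨φ, h1, h2, h3, h4⟩ ⟨ψ, g1, g2, g3, g4⟩
    exact ⟨φ.trans ψ, by simp [h1, g1], by simp [h2, g2], by simp [h3, g3], by simp [h4, g4]⟩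

/-- Any lift of `1` along the projection, together with the image of `1` under the inclusion,
is a basis exhibiting an extension as some `k²_{a,b}`. -/
lemma exists_modelRel (e : AbExt k) : ∃ ab, ExtRel (modelExt ab) e := by
  let := e.addE; let := e.modE
  obtain ⟨e₁, he₁⟩ := e.proj_surj 1
  have hpi : ∀ c, e.proj (e.incl c) = 0 := fun c => (e.exact _).2 ⟨c, rfl⟩
  let f : (k × k) →ₗ[k] e.carrier := (LinearMap.toSpanSingleton k _ e₁).coprod e.incl
  have hf : ∀ u, f u = u.1 • e₁ + e.incl u.2 := fun u => by simp [f]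
  have hpf : ∀ u, e.proj (f u) = u.1 := fun u => by simp [hf, hpi, he₁]
  have hbij : Function.Bijective f := by
    constructor
    · rw [← LinearMap.ker_eq_bot, LinearMap.ker_eq_bot']
      intro u hu
      have h1 : u.1 = 0 := by rw [← hpf, hu, map_zero]
      rw [hf, h1, zero_smul, zero_add] at hu
      have h2 : u.2 = 0 := e.incl_inj (by rw [hu, map_zero])
      exact Prod.ext h1 h2
    · intro x
      obtain ⟨c, hc⟩ := (e.exact (x - e.proj x • e₁)).1 (by simp [he₁])
      exact ⟨(e.proj x, c), by rw [hf, hc]; simp⟩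
  let φ : (k × k) ≃ₗ[k] e.carrier := LinearEquiv.ofBijective f hbij
  have hφ : ∀ u, φ u = u.1 • e₁ + e.incl u.2 := hf
  have hφ0 : ∀ c, φ (0, c) = e.incl c := fun c => by simp [hφ]
  obtain ⟨a, b, hab, h1, h2⟩ := exists_model_params e.poisson φ
    (fun x y => by
      obtain ⟨c, hc⟩ := (e.exact _).1 (e.proj_mul x y)
      exact ⟨c, by rw [hφ0, hc]⟩)
    (fun x y => by
      obtain ⟨c, hc⟩ := (e.exact _).1 (e.proj_br x y)
      exact ⟨c, by rw [hφ0, hc]⟩)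
    (by rw [hφ0, ← e.incl_mul, map_zero])
  exact ⟨⟨(a, b), hab⟩, φ, h1, h2, hφ0, hpf⟩

lemma params_eq_of_extRel {ab ab' : {ab : k × k // ab.1 * ab.2 = 0}}
    (h : ExtRel (modelExt ab) (modelExt ab')) : ab = ab' := by
  obtain ⟨φ, h1, h2, h3, h4⟩ := h
  change (k × k) ≃ₗ[k] (k × k) at φ
  replace h1 : ∀ u v, φ (mulAB k ab.1.1 u v) = mulAB k ab'.1.1 (φ u) (φ v) := h1
  replace h2 : ∀ u v, φ (brAB k ab.1.2 u v) = brAB k ab'.1.2 (φ u) (φ v) := h2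
  replace h3 : ∀ c : k, φ (0, c) = (0, c) := h3
  replace h4 : ∀ u, (φ u).1 = u.1 := h4
  have e1 := h1 (1, 0) (1, 0)
  have e2 := h2 (1, 0) (0, 1)
  simp only [mulAB, brAB, h3, h4, Prod.mk.injEq] at e1 e2
  apply Subtype.ext
  apply Prod.ext
  · simpa using e1.2
  · simpa using e2.2

lemma PoissonIso.trans {A B C : Type u} [AddCommGroup A] [Module k A] [AddCommGroup B] [Module k B]
    [AddCommGroup C] [Module k C] {mA bA : A → A → A} {mB bB : B → B → B} {mC bC : C → C → C}
    (h : PoissonIso k mA bA mB bB) (h' : PoissonIso k mB bB mC bC) :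
    PoissonIso k mA bA mC bC := by
  obtain ⟨φ, h1, h2⟩ := h
  obtain ⟨ψ, g1, g2⟩ := h'
  exact ⟨φ.trans ψ, by simp [h1, g1], by simp [h2, g2]⟩

lemma PoissonIso.symm {A B : Type u} [AddCommGroup A] [Module k A] [AddCommGroup B] [Module k B]
    {mA bA : A → A → A} {mB bB : B → B → B}
    (h : PoissonIso k mA bA mB bB) : PoissonIso k mB bB mA bA := by
  obtain ⟨φ, h1, h2⟩ := h
  refine ⟨φ.symm, fun a b => ?_, fun a b => ?_⟩
  · rw [LinearEquiv.symm_apply_eq, h1]; simp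
  · rw [LinearEquiv.symm_apply_eq, h2]; simp

/-- Rescaling `e₂` by `a`. -/
lemma poissonIso_rescale_mul {a : k} (ha : a ≠ 0) :
    PoissonIso k (mulAB k a) (brAB k 0) (mulAB k 1) (brAB k 0) := by
  refine ⟨(LinearEquiv.refl k k).prodCongr (LinearEquiv.smulOfNeZero k k a⁻¹ (inv_ne_zero ha)),
    fun x y => ?_, fun x y => ?_⟩
  · ext <;> simp [mulAB, ha]
  · ext <;> simp [brAB]

/-- Rescaling `e₁` by `b⁻¹`. -/
lemma poissonIso_rescale_br {b : k} (hb : b ≠ 0) :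
    PoissonIso k (mulAB k 0) (brAB k b) (mulAB k 0) (brAB k 1) := by
  refine ⟨(LinearEquiv.smulOfNeZero k k b hb).prodCongr (LinearEquiv.refl k k),
    fun x y => ?_, fun x y => ?_⟩
  · ext <;> simp [mulAB]
  · ext <;> simp [brAB]; ring

lemma model_trichotomy {a b : k} (hab : a * b = 0) :
    PoissonIso k (mulAB k a) (brAB k b) (mulAB k 0) (brAB k 0) ∨
    PoissonIso k (mulAB k a) (brAB k b) (mulAB k 1) (brAB k 0) ∨
    PoissonIso k (mulAB k a) (brAB k b) (mulAB k 0) (brAB k 1) := by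
  by_cases ha : a = 0
  · by_cases hb : b = 0
    · subst ha hb
      exact Or.inl ⟨LinearEquiv.refl k _, by simp, by simp⟩
    · subst ha
      exact Or.inr (Or.inr (poissonIso_rescale_br hb))
  · obtain rfl : b = 0 := (mul_eq_zero.mp hab).resolve_left ha
    exact Or.inr (Or.inl (poissonIso_rescale_mul ha))

lemma exists_model_of_metabelian {E : Type u} [AddCommGroup E] [Module k E] {mulE brE : E → E → E}
    (hP : IsPoisson k mulE brE) (hM : IsMetabelian k mulE brE) (hE : Module.finrank k E = 2) :
    ∃ a b : k, a * b = 0 ∧ PoissonIso k (mulAB k a) (brAB k b) mulE brE := by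
  have : FiniteDimensional k E := Module.finite_of_finrank_pos (by omega)
  have hrank : Module.finrank k (k × k) = Module.finrank k E := by simp [hE]
  obtain ⟨I, hI, hI0⟩ := hM
  by_cases hz : ∀ x y, mulE x y = 0 ∧ brE x y = 0
  · refine ⟨0, 0, by simp, LinearEquiv.ofFinrankEq _ _ hrank, fun x y => ?_, fun x y => ?_⟩
    · rw [(hz _ _).1]; simp [mulAB]
    · rw [(hz _ _).2]; simp [brAB]
  -- A nonzero product or bracket gives `e₂`, and shows that `I` is not everything.
  obtain ⟨e₂, he₂, hne⟩ : ∃ e₂ ∈ I, e₂ ≠ 0 := by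
    by_contra! h
    exact hz fun x y => ⟨h _ (hI x y).1, h _ (hI x y).2⟩
  obtain ⟨e₁, he₁⟩ : ∃ e₁, e₁ ∉ I := by
    by_contra! h
    exact hz fun x y => hI0 x (h x) y (h y)
  let f : (k × k) →ₗ[k] E :=
    (LinearMap.toSpanSingleton k E e₁).coprod (LinearMap.toSpanSingleton k E e₂)
  have hf : ∀ u, f u = u.1 • e₁ + u.2 • e₂ := fun u => by simp [f]
  have hfI : ∀ u, f u ∈ I → u.1 = 0 := fun u hu => by
    rw [hf, I.add_mem_iff_left (I.smul_mem _ he₂)] at hu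
    by_contra h
    exact he₁ ((I.smul_mem_iff h).1 hu)
  have hinj : Function.Injective f := by
    rw [← LinearMap.ker_eq_bot, LinearMap.ker_eq_bot']
    intro u hu
    have h1 : u.1 = 0 := hfI u (hu ▸ I.zero_mem)
    rw [hf, h1, zero_smul, zero_add] at hu
    exact Prod.ext h1 ((smul_eq_zero.1 hu).resolve_right hne)
  let φ : (k × k) ≃ₗ[k] E := LinearMap.linearEquivOfInjective f hinj hrank
  have hφ : ∀ u, φ u = f u := fun u => LinearMap.linearEquivOfInjective_apply ..
  have hline : ∀ x ∈ I, ∃ c : k, x = φ (0, c) := fun x hx => by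
    obtain ⟨u, rfl⟩ := φ.surjective x
    have h := hfI u (hφ u ▸ hx)
    exact ⟨u.2, by rw [← h]⟩
  have h01 : φ (0, 1) ∈ I := by rw [hφ, hf]; simpa using he₂
  obtain ⟨a, b, hab, h1, h2⟩ := exists_model_params hP φ (fun x y => hline _ (hI x y).1)
    (fun x y => hline _ (hI x y).2) (hI0 _ h01 _ h01).1
  exact ⟨a, b, hab, φ, h1, h2⟩

/-- A Poisson isomorphism transports the vanishing of the multiplication. -/
lemma mul_param_eq_zero {b b' a' : k}
    (h : PoissonIso k (mulAB k 0) (brAB k b) (mulAB k a') (brAB k b')) : a' = 0 := by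
  obtain ⟨φ, h1, -⟩ := h
  have h := h1 (φ.symm (1, 0)) (φ.symm (1, 0))
  have h0 : ∀ u v, mulAB k 0 u v = 0 := fun u v => by simp [mulAB]
  rw [h0, map_zero, φ.apply_symm_apply] at h
  simpa [mulAB] using h.symm

/-- A Poisson isomorphism transports the vanishing of the bracket. -/
lemma br_param_eq_zero {a a' b' : k}
    (h : PoissonIso k (mulAB k a) (brAB k 0) (mulAB k a') (brAB k b')) : b' = 0 := by
  obtain ⟨φ, -, h2⟩ := h
  have h := h2 (φ.symm (1, 0)) (φ.symm (0, 1))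
  have h0 : ∀ u v, brAB k 0 u v = 0 := fun u v => by simp [brAB]
  rw [h0, map_zero, φ.apply_symm_apply, φ.apply_symm_apply] at h
  simpa [brAB] using h.symm

variable (k)

/-- **Example 2.16.**  `PH²(k₀, k₀)` is in bijection with `{(a,b) ∈ k² | ab = 0}` via
`(a,b) ↦ [k²_{a,b}]`; in particular, up to isomorphism there exist exactly three
`2`-dimensional metabelian Poisson algebras: `k²_{(0,0)}`, `k²_{(1,0)}` and `k²_{(0,1)}`. -/
theorem statement10 :
    -- the bijection PH²(k₀, k₀) ≅ {(a,b) ∈ k² | ab = 0}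
    (∃ F : {ab : k × k // ab.1 * ab.2 = 0} ≃
        Quot (fun e₁ e₂ : PoissonExt k k k (fun _ _ => 0) (fun _ _ => 0)
            (fun _ _ => 0) (fun _ _ => 0) => ExtRel e₁ e₂),
      ∀ (ab : {ab : k × k // ab.1 * ab.2 = 0})
        (e : PoissonExt k k k (fun _ _ => 0) (fun _ _ => 0) (fun _ _ => 0) (fun _ _ => 0)),
        F ab = Quot.mk _ e →
        (letI := e.addE; letI := e.modE;
         ∃ φ : (k × k) ≃ₗ[k] e.carrier,
           (∀ u v, φ (mulAB k ab.1.1 u v) = e.mulE (φ u) (φ v)) ∧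
           (∀ u v, φ (brAB k ab.1.2 u v) = e.brE (φ u) (φ v)) ∧
           (∀ c : k, φ (0, c) = e.incl c) ∧
           (∀ u, e.proj (φ u) = u.1))) ∧
    -- the three model algebras are 2-dimensional metabelian Poisson algebras
    (∀ ab : {ab : k × k // ab.1 * ab.2 = 0},
        IsPoisson k (mulAB k ab.1.1) (brAB k ab.1.2) ∧
        IsMetabelian k (mulAB k ab.1.1) (brAB k ab.1.2)) ∧
    -- every 2-dimensional metabelian Poisson algebra is isomorphic to one of the three
    (∀ (E : Type u) [AddCommGroup E] [Module k E] (mulE brE : E → E → E),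
        IsPoisson k mulE brE → IsMetabelian k mulE brE → Module.finrank k E = 2 →
        (PoissonIso k mulE brE (mulAB k 0) (brAB k 0) ∨
         PoissonIso k mulE brE (mulAB k 1) (brAB k 0) ∨
         PoissonIso k mulE brE (mulAB k 0) (brAB k 1))) ∧
    -- and the three are pairwise non-isomorphic
    ¬ PoissonIso k (mulAB k 0) (brAB k 0) (mulAB k 1) (brAB k 0) ∧
    ¬ PoissonIso k (mulAB k 0) (brAB k 0) (mulAB k 0) (brAB k 1) ∧
    ¬ PoissonIso k (mulAB k 1) (brAB k 0) (mulAB k 0) (brAB k 1) := by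
  refine ⟨⟨Equiv.ofBijective (fun ab => Quot.mk _ (modelExt ab)) ⟨?_, ?_⟩, ?_⟩,
    fun ab => ⟨isPoisson_model ab.2, isMetabelian_model _ _⟩, ?_,
    fun h => one_ne_zero (mul_param_eq_zero h), fun h => one_ne_zero (br_param_eq_zero h),
    fun h => one_ne_zero (br_param_eq_zero h)⟩
  · intro ab ab' h
    exact params_eq_of_extRel ((extRel_equivalence.quot_mk_eq_iff _ _).1 h)
  · rintro ⟨e⟩
    obtain ⟨ab, h⟩ := exists_modelRel e
    exact ⟨ab, Quot.sound h⟩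
  · intro ab e h
    exact (extRel_equivalence.quot_mk_eq_iff (modelExt ab) e).1 h
  · intro E _ _ mulE brE hP hM hE
    obtain ⟨a, b, hab, h⟩ := exists_model_of_metabelian hP hM hE
    exact (model_trichotomy hab).imp h.symm.trans (Or.imp h.symm.trans h.symm.trans)

end Statement
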